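/- arXiv:2311.06013 — 3 statements merged into one kernel-verified Lean document; each statement's English description precedes it below -/
import Mathlib

section
/- For every real t ≥ 1 there exists n ∈ ℕ such that: (a) for all indices 0 ≤ a < b ≤ 4^n, Metric.hausdorffDist (⋃_{a ≤ k < b} segment ℝ (K_n k) (K_n (k+1))) (segment ℝ (K_n a) (K_n b)) ≤ 6 · dist (K_n a) (K_n b); and (b) for every m ≥ 1 and every sequence of indices q : Fin (m+1) → ℕ with q 0 = 0, q m = 4^n, q j ≤ 4^n for all j, and |q (j+1) − q j| = 1 for all j < m (i.e., a walk in the path graph F_n from one extreme vertex to the other), the length ∑_{j<m} dist (K_n (q j)) (K_n (q (j+1))) exceeds t · dist (K_n 0) (K_n (4^n)). In particular F_n is a 6-Hausdorff-spanner but not a t-spanner. -/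
/-- The point of the Euclidean plane with the given coordinates. -/
noncomputable def pt (x y : ℝ) : EuclideanSpace ℝ (Fin 2) :=
  (WithLp.equiv 2 (Fin 2 → ℝ)).symm ![x, y]

/-- Rotation by 90 degrees counterclockwise: `ρ(x, y) = (−y, x)`. -/
noncomputable def rot90 (x : EuclideanSpace ℝ (Fin 2)) : EuclideanSpace ℝ (Fin 2) :=
  pt (-x 1) (x 0)

/-- The vertices of the Koch polyline: `koch n k` is the `k`-th vertex (for `0 ≤ k ≤ 4^n`)
of the `n`-th stage `K_n` of the Koch curve construction, starting from the unit segment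
from `(0,0)` to `(1,0)`.  Each edge `ab` of `K_n` is replaced in `K_{n+1}` by the four edges
through `a`, `a + (b−a)/3`, `(a+b)/2 + (√3/6)·ρ(b−a)`, `a + 2(b−a)/3`, `b`. -/
noncomputable def koch : ℕ → ℕ → EuclideanSpace ℝ (Fin 2)
  | 0, k => if k = 0 then pt 0 0 else pt 1 0
  | n + 1, j =>
      let a := koch n (j / 4)
      let b := koch n (j / 4 + 1)
      if j % 4 = 0 then a
      else if j % 4 = 1 then a + (3 : ℝ)⁻¹ • (b - a)
      else if j % 4 = 2 then (2 : ℝ)⁻¹ • (a + b) + (Real.sqrt 3 / 6) • rot90 (b - a)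
      else a + (2 / 3 : ℝ) • (b - a)
/-- Koch vertices as complex numbers. -/
noncomputable def kc (n k : ℕ) : ℂ := ⟨koch n k 0, koch n k 1⟩

/-- Offsets of the four subpieces. -/
noncomputable def ks (i : ℕ) : ℂ :=
  if i = 0 then 0 else if i = 1 then ⟨1/3, 0⟩ else if i = 2 then ⟨1/2, √3/6⟩
  else if i = 3 then ⟨2/3, 0⟩ else 1

/-- Directions of the four subpieces. -/
noncomputable def ke (i : ℕ) : ℂ :=
  if i = 0 then ⟨1/3, 0⟩ else if i = 1 then ⟨1/6, √3/6⟩ else if i = 2 then ⟨1/6, -√3/6⟩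
  else ⟨1/3, 0⟩

lemma dist_kc (n a b : ℕ) : dist (koch n a) (koch n b) = ‖kc n a - kc n b‖ := by
  rw [EuclideanSpace.dist_eq, Complex.norm_def, Complex.normSq_apply]
  simp [Fin.sum_univ_two, kc, Real.dist_eq, sq_abs]
  congr 1; ring

lemma kc_zero_zero : kc 0 0 = 0 := by
  apply Complex.ext <;> simp [kc, koch, pt]

lemma kc_zero_pos (k : ℕ) (h : k ≠ 0) : kc 0 k = 1 := by
  apply Complex.ext <;> simp [kc, koch, pt, h]

lemma kc_succ (n k i : ℕ) (hi : i < 4) :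
    kc (n+1) (4*k+i) = kc n k + ks i * (kc n (k+1) - kc n k) := by
  have h1 : (4*k+i)/4 = k := by omega
  have h2 : (4*k+i)%4 = i := by omega
  apply Complex.ext
  · simp only [kc, koch, h1, h2]
    interval_cases i <;> simp [ks, rot90, pt] <;> ring
  · simp only [kc, koch, h1, h2]
    interval_cases i <;> simp [ks, rot90, pt] <;> ring

lemma ks_succ (i : ℕ) (hi : i < 4) : ks (i+1) = ks i + ke i := by
  apply Complex.ext <;> interval_cases i <;> simp [ks, ke] <;> ring

lemma kc_succ' (n k i : ℕ) (hi : i ≤ 4) :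
    kc (n+1) (4*k+i) = kc n k + ks i * (kc n (k+1) - kc n k) := by
  rcases hi.lt_or_eq with h | rfl
  · exact kc_succ n k i h
  · have := kc_succ n (k+1) 0 (by norm_num)
    rw [show 4*k+4 = 4*(k+1)+0 by ring, this]
    simp [ks]

lemma norm_ke (i : ℕ) : ‖ke i‖ = 1/3 := by
  have h3 : √3 * √3 = 3 := Real.mul_self_sqrt (by norm_num)
  rw [Complex.norm_def, Complex.normSq_apply, Real.sqrt_eq_iff_mul_self_eq_of_pos (by norm_num)]
  unfold ke
  split_ifs <;> simp <;> nlinarith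

lemma kc_edge (n k : ℕ) (hk : k < 4^n) : ‖kc n k - kc n (k+1)‖ = (1/3)^n := by
  induction n generalizing k with
  | zero =>
    have : k = 0 := by simpa using hk
    subst this
    simp [kc_zero_zero, kc_zero_pos]
  | succ n ih =>
    obtain ⟨q, i, hi, rfl⟩ : ∃ q i, i < 4 ∧ k = 4*q+i := ⟨k/4, k%4, by omega, by omega⟩
    have hq : q < 4^n := by rw [pow_succ] at hk; omega
    rw [add_assoc, kc_succ' _ _ _ hi.le, kc_succ' _ _ (i+1) hi, ks_succ i hi]
    rw [show kc n q + ks i * (kc n (q+1) - kc n q) -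
      (kc n q + (ks i + ke i) * (kc n (q+1) - kc n q)) = ke i * (kc n q - kc n (q+1)) by ring,
      norm_mul, norm_ke, ih q hq]
    ring

/-- Self-similarity. -/
lemma kc_sim (n m k j : ℕ) (hj : j ≤ 4^m) :
    kc (n+m) (4^m*k+j) = kc n k + kc m j * (kc n (k+1) - kc n k) := by
  induction m generalizing j with
  | zero =>
    have : j = 0 ∨ j = 1 := by simp at hj; omega
    rcases this with rfl | rfl
    · simp [kc_zero_zero]
    · simp [kc_zero_pos]
  | succ m ih =>
    obtain ⟨q, i, hi, rfl⟩ : ∃ q i, i < 4 ∧ j = 4*q+i := ⟨j/4, j%4, by omega, by omega⟩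
    have hq : q ≤ 4^m := by rw [pow_succ] at hj; omega
    rw [show 4^(m+1)*k + (4*q+i) = 4*(4^m*k+q)+i by ring, ← add_assoc, kc_succ _ _ _ hi,
      kc_succ _ _ _ hi, ih q hq]
    rcases Nat.eq_zero_or_pos i with rfl | hi0
    · simp [ks]
    · have hq' : q + 1 ≤ 4^m := by rw [pow_succ] at hj; omega
      rw [add_assoc (4^m*k) q 1, ih (q+1) hq']
      ring

lemma kc_one (i : ℕ) (hi : i ≤ 4) : kc 1 i = ks i := by
  have := kc_succ' 0 0 i hi
  simpa [kc_zero_zero, kc_zero_pos] using this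

lemma kc_front (n i j : ℕ) (hi : i < 4) (hj : j ≤ 4^n) :
    kc (n+1) (4^n*i+j) = ks i + ke i * kc n j := by
  rw [add_comm n 1, kc_sim 1 n i j hj, kc_one i hi.le, kc_one (i+1) hi, ks_succ i hi]
  ring

/-- The triangle containing the curve. -/
def InT (z : ℂ) : Prop := 0 ≤ z.im ∧ √3 * z.im ≤ z.re ∧ √3 * z.im ≤ 1 - z.re

lemma split_idx (N j : ℕ) (hj : j ≤ N * 4) (hN : 0 < N) :
    ∃ i r, i < 4 ∧ r ≤ N ∧ j = N * i + r := by
  rcases hj.lt_or_eq with h | h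
  · exact ⟨j / N, j % N, Nat.div_lt_of_lt_mul h, (Nat.mod_lt _ hN).le, (Nat.div_add_mod j N).symm⟩
  · exact ⟨3, N, by norm_num, le_rfl, by omega⟩

lemma inT_sub (i : ℕ) (hi : i < 4) (z : ℂ) (hz : InT z) : InT (ks i + ke i * z) := by
  have h3 : √3 * √3 = 3 := Real.mul_self_sqrt (by norm_num)
  have h0 : 0 ≤ √3 := Real.sqrt_nonneg 3
  obtain ⟨h1, h2, h4⟩ := hz
  have h5 : √3 * (√3 * z.im) = 3 * z.im := by rw [← mul_assoc, h3]
  have h6 := mul_nonneg h0 h1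
  have h7 := mul_le_mul_of_nonneg_left h2 h0
  have h8 := mul_le_mul_of_nonneg_left h4 h0
  have h9 : √3 * (√3 * z.re) = 3 * z.re := by rw [← mul_assoc, h3]
  unfold InT
  interval_cases i <;> simp [ks, ke] <;> refine ⟨?_, ?_, ?_⟩ <;> nlinarith

lemma inT_kc (n j : ℕ) (hj : j ≤ 4^n) : InT (kc n j) := by
  induction n generalizing j with
  | zero =>
    have : j = 0 ∨ j = 1 := by simp at hj; omega
    rcases this with rfl | rfl
    · simp [kc_zero_zero, InT]
    · simp [kc_zero_pos, InT]
  | succ n ih =>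
    obtain ⟨i, r, hi, hr, rfl⟩ := split_idx (4^n) j (by rwa [← pow_succ]) (by positivity)
    rw [kc_front n i r hi hr]
    exact inT_sub i hi _ (ih r hr)

lemma inT_diam (z w : ℂ) (hz : InT z) (hw : InT w) : ‖z - w‖ ≤ 1 := by
  have h3 : √3 * √3 = 3 := Real.mul_self_sqrt (by norm_num)
  have h0 : 1 ≤ √3 := by rw [Real.one_le_sqrt]; norm_num
  obtain ⟨a1, a2, a3⟩ := hz
  obtain ⟨b1, b2, b3⟩ := hw
  have key : Complex.normSq (z - w) ≤ 1 := by
    rw [Complex.normSq_apply, Complex.sub_re, Complex.sub_im]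
    generalize z.re = x at *
    generalize z.im = y at *
    generalize w.re = u at *
    generalize w.im = v at *
    have e1 : y ≤ √3 * y := by nlinarith
    have e2 : v ≤ √3 * v := by nlinarith
    have A : |x - u| + |y - v| ≤ 1 := by
      rcases abs_cases (x-u) with ⟨p, _⟩ | ⟨p, _⟩ <;> rcases abs_cases (y-v) with ⟨q, _⟩ | ⟨q, _⟩ <;>
        rw [p, q] <;> linarith
    nlinarith [abs_nonneg (x-u), abs_nonneg (y-v), abs_mul_abs_self (x-u), abs_mul_abs_self (y-v)]
  rw [Complex.norm_def]
  exact Real.sqrt_le_one.mpr key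

lemma re_bounds (i : ℕ) (hi : i < 4) (z : ℂ) (hz : InT z) :
    (if i = 0 then 0 else if i = 1 then 1/3 else if i = 2 then 1/2 else 2/3 : ℝ)
      ≤ (ks i + ke i * z).re ∧ (ks i + ke i * z).re ≤
      (if i = 0 then 1/3 else if i = 1 then 1/2 else if i = 2 then 2/3 else 1 : ℝ) := by
  have h3 : √3 * √3 = 3 := Real.mul_self_sqrt (by norm_num)
  have h0 : 0 ≤ √3 := Real.sqrt_nonneg 3
  obtain ⟨h1, h2, h4⟩ := hz
  have h6 := mul_nonneg h0 h1
  interval_cases i <;> simp [ks, ke] <;> constructor <;> nlinarith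

lemma kc_at_zero (n : ℕ) : kc n 0 = 0 := by
  induction n with
  | zero => exact kc_zero_zero
  | succ n ih => simpa [ks, ih] using kc_succ n 0 0 (by norm_num)

lemma kc_at_end (n : ℕ) : kc n (4^n) = 1 := by
  induction n with
  | zero => simp [kc_zero_pos]
  | succ n ih =>
    have := kc_front n 3 (4^n) (by norm_num) le_rfl
    rw [show 4^n*3+4^n = 4^(n+1) by ring, ih] at this
    rw [this]
    apply Complex.ext <;> simp [ks, ke] <;> norm_num

lemma end_zero (n j j' : ℕ) (h : j ≤ j') (hj : j' ≤ 4^n) : ‖kc n j‖ ≤ 3 * ‖kc n j'‖ := by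
  induction n generalizing j j' with
  | zero =>
    have : j' = 0 ∨ j' = 1 := by simp at hj; omega
    have : j = 0 ∨ j = 1 := by omega
    rcases this with rfl | rfl
    · simp [kc_zero_zero]
    · have : j' = 1 := by omega
      subst this; simp [kc_zero_pos]
  | succ n ih =>
    by_cases hc : j' ≤ 4^n
    · have e := kc_front n 0 j' (by norm_num) hc
      have e' := kc_front n 0 j (by norm_num) (h.trans hc)
      simp only [mul_zero, zero_add, show ks 0 = 0 by simp [ks]] at e e'
      rw [e, e', norm_mul, norm_mul, norm_ke]
      linarith [ih j j' h hc]
    · have hT := inT_diam _ _ (inT_kc (n+1) j (h.trans hj)) (inT_kc (n+1) 0 (by positivity))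
      rw [kc_at_zero, sub_zero] at hT
      obtain ⟨i, r, hi, hr, rfl⟩ := split_idx (4^n) j' (by rwa [← pow_succ]) (by positivity)
      have hi0 : i ≠ 0 := by rintro rfl; apply hc; simpa using hr
      have hb := (re_bounds i hi _ (inT_kc n r hr)).1
      rw [← kc_front n i r hi hr] at hb
      have hn := Complex.re_le_norm (kc (n+1) (4^n*i+r))
      have : (1/3:ℝ) ≤ (kc (n+1) (4^n*i+r)).re := by
        refine le_trans ?_ hb
        interval_cases i <;> simp at hi0 ⊢ <;> norm_num
      linarith

lemma end_one (n j j' : ℕ) (h : j' ≤ j) (hj : j ≤ 4^n) : ‖1 - kc n j‖ ≤ 3 * ‖1 - kc n j'‖ := by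
  induction n generalizing j j' with
  | zero =>
    have : j = 0 ∨ j = 1 := by simp at hj; omega
    rcases this with rfl | rfl
    · have : j' = 0 := by omega
      subst this; simp [kc_zero_zero]
    · simp [kc_zero_pos]
  | succ n ih =>
    by_cases hc : 4^n*3 ≤ j'
    · obtain ⟨r', rfl⟩ := Nat.exists_eq_add_of_le hc
      obtain ⟨r, rfl⟩ := Nat.exists_eq_add_of_le (hc.trans h)
      have hr : r ≤ 4^n := by rw [pow_succ] at hj; omega
      have hrr : r' ≤ r := by omega
      have e3 : (1:ℂ) = ks 3 + ke 3 := by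
        rw [← ks_succ 3 (by norm_num)]; simp [ks]
      rw [kc_front n 3 r (by norm_num) hr, kc_front n 3 r' (by norm_num) (hrr.trans hr)]
      have E : ∀ z, 1 - (ks 3 + ke 3 * z) = ke 3 * (1 - z) := by
        intro z; linear_combination e3
      rw [E, E, norm_mul, norm_mul, norm_ke]
      linarith [ih r r' hrr hr]
    · have hT := inT_diam _ _ (inT_kc (n+1) _ le_rfl) (inT_kc (n+1) j hj)
      rw [kc_at_end] at hT
      obtain ⟨i, r, hi, hr, rfl⟩ := split_idx (4^n) j' (by rw [← pow_succ]; omega) (by positivity)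
      have hi0 : i ≠ 3 := by rintro rfl; omega
      have hb := (re_bounds i hi _ (inT_kc n r hr)).2
      rw [← kc_front n i r hi hr] at hb
      have hn := Complex.re_le_norm (1 - kc (n+1) (4^n*i+r))
      have : (kc (n+1) (4^n*i+r)).re ≤ 2/3 := by
        refine le_trans hb ?_
        interval_cases i <;> simp at hi0 ⊢ <;> norm_num
      simp only [Complex.sub_re, Complex.one_re] at hn
      linarith

lemma norm_le_of_sq (z : ℂ) (a : ℝ) (ha : 0 ≤ a) (h : z.re^2 + z.im^2 ≤ a^2) : ‖z‖ ≤ a := by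
  rw [Complex.norm_def, Complex.normSq_apply]
  apply Real.sqrt_le_iff.mpr ⟨ha, by nlinarith⟩

lemma corner (i : ℕ) (hi : i < 3) (α β : ℂ) (hα : InT α) (hβ : InT β) :
    ‖1 - α‖ + ‖β‖ ≤ 6 * ‖ke i * (1 - α) + ke (i+1) * β‖ := by
  have h3 : √3 * √3 = 3 := Real.mul_self_sqrt (by norm_num)
  have h3' : √3 ^ 2 = 3 := by rw [sq, h3]
  have h0 : 0 ≤ √3 := Real.sqrt_nonneg 3
  have h01 : 1 ≤ √3 := by rw [Real.one_le_sqrt]; norm_num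
  obtain ⟨a1, a2, a3⟩ := hα
  obtain ⟨b1, b2, b3⟩ := hβ
  have A6 := mul_nonneg h0 a1
  have B6 := mul_nonneg h0 b1
  have aux : ∀ x y : ℝ, 0 ≤ y → √3 * y ≤ x →
      (0 ≤ √3 * x - y ∧ x^2 + y^2 ≤ (√3 * x - y)^2) ∧
      (0 ≤ x + √3 * y ∧ x^2 + y^2 ≤ (x + √3*y)^2) := by
    intro x y hy hxy
    have h1 : 0 ≤ √3 * y := mul_nonneg h0 hy
    have h2 : √3 * (√3 * y) ≤ √3 * x := mul_le_mul_of_nonneg_left hxy h0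
    rw [← mul_assoc, h3] at h2
    have h4 : √3 * y * x ≤ x * x := mul_le_mul_of_nonneg_right hxy (by linarith)
    refine ⟨⟨by linarith, ?_⟩, by linarith, ?_⟩
    · have : (√3 * x - y)^2 = 3 * x^2 - 2 * (√3 * y * x) + y^2 := by
        linear_combination x^2 * h3
      nlinarith
    · have : (x + √3*y)^2 = x^2 + 2 * (√3 * y * x) + 3 * y^2 := by
        linear_combination y^2 * h3
      have : 0 ≤ √3 * y * x := mul_nonneg h1 (by linarith)
      nlinarith
  obtain ⟨⟨p1, p2⟩, p3, p4⟩ := aux _ _ a1 a3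
  obtain ⟨⟨q1, q2⟩, q3, q4⟩ := aux _ _ b1 b2
  have N1 : ‖1 - α‖ ≤ √3 * (1 - α.re) - α.im := norm_le_of_sq _ _ p1 (by simpa using p2)
  have N2 : ‖1 - α‖ ≤ (1 - α.re) + √3 * α.im := norm_le_of_sq _ _ p3 (by simpa using p4)
  have N3 : ‖β‖ ≤ √3 * β.re - β.im := norm_le_of_sq _ _ q1 q2
  have N4 : ‖β‖ ≤ β.re + √3 * β.im := norm_le_of_sq _ _ q3 q4
  have F : ∀ (u z : ℂ), ‖u‖ = 1 → (u * z).re ≤ ‖z‖ := by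
    intro u z hu
    calc (u*z).re ≤ ‖u*z‖ := Complex.re_le_norm _
      _ = ‖z‖ := by rw [norm_mul, hu, one_mul]
  have U : ∀ s : ℝ, s^2 = 1/4 → ‖(⟨√3/2, s⟩ : ℂ)‖ = 1 := by
    intro s hs
    rw [Complex.norm_def, Complex.normSq_apply, Real.sqrt_eq_one]
    simp only
    nlinarith
  interval_cases i
  · have := F ⟨√3/2, -1/2⟩ (ke 0 * (1 - α) + ke (0+1) * β) (U _ (by norm_num))
    have e : ((⟨√3/2, -1/2⟩ : ℂ) * (ke 0 * (1 - α) + ke (0+1) * β)).re =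
        (√3 * (1 - α.re) - α.im)/6 + (√3 * β.re - β.im)/6 := by
      simp [ke]
      linear_combination (-β.im/12) * h3
    rw [e] at this
    linarith
  · have := F 1 (ke 1 * (1 - α) + ke (1+1) * β) (by simp)
    have e : ((1 : ℂ) * (ke 1 * (1 - α) + ke (1+1) * β)).re =
        ((1 - α.re) + √3 * α.im)/6 + (β.re + √3 * β.im)/6 := by
      simp [ke]
      ring
    rw [e] at this
    linarith
  · have := F ⟨√3/2, 1/2⟩ (ke 2 * (1 - α) + ke (2+1) * β) (U _ (by norm_num))
    have e : ((⟨√3/2, 1/2⟩ : ℂ) * (ke 2 * (1 - α) + ke (2+1) * β)).re =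
        (√3 * (1 - α.re) - α.im)/6 + (√3 * β.re - β.im)/6 := by
      simp [ke]
      linear_combination (-α.im/12) * h3
    rw [e] at this
    linarith

lemma main_bound (n a k b : ℕ) (hak : a ≤ k) (hkb : k ≤ b) (hb : b ≤ 4^n) :
    ‖kc n k - kc n a‖ ≤ 6 * ‖kc n a - kc n b‖ ∨ ‖kc n k - kc n b‖ ≤ 6 * ‖kc n a - kc n b‖ := by
  induction n generalizing a k b with
  | zero =>
    have : b = 0 ∨ b = 1 := by simp at hb; omega
    have : k = a ∨ k = b := by omega
    rcases this with rfl | rfl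
    · left; simp
    · right; simp
  | succ n ih =>
    obtain ⟨i, r, hi, hr, rfl⟩ := split_idx (4^n) a (by rw [← pow_succ]; omega) (by positivity)
    obtain ⟨i', r', hi', hr', rfl⟩ := split_idx (4^n) b (by rw [← pow_succ]; omega) (by positivity)
    have hTa := inT_kc n r hr
    have hTb := inT_kc n r' hr'
    rcases lt_trichotomy i' i with hlt | rfl | hlt
    · have : 4^n * (i'+1) ≤ 4^n * i := Nat.mul_le_mul_left _ hlt
      have : k = 4^n * i + r := by rw [mul_add] at this; omega
      subst this
      left; simp
    · obtain ⟨s, rfl⟩ : ∃ s, k = 4^n * i' + s := ⟨k - 4^n*i', by omega⟩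
      have hs : s ≤ 4^n := by omega
      rw [kc_front n i' r hi hr, kc_front n i' r' hi hr', kc_front n i' s hi hs]
      have E : ∀ x y, ‖(ks i' + ke i' * x) - (ks i' + ke i' * y)‖ = 1/3 * ‖x - y‖ := by
        intro x y
        rw [← norm_ke i', ← norm_mul]; congr 1; ring
      rw [E, E, E]
      rcases ih r s r' (by omega) (by omega) hr' with h | h
      · left; linarith
      · right; linarith
    · rcases (Nat.succ_le_of_lt hlt).lt_or_eq with hgap | hadj
      · left
        have hd := inT_diam _ _ (inT_kc (n+1) k (hkb.trans hb))
          (inT_kc (n+1) _ (hak.trans (hkb.trans hb)))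
        have R1 := (re_bounds i hi _ hTa).2
        have R2 := (re_bounds i' hi' _ hTb).1
        rw [← kc_front n i r hi hr] at R1
        rw [← kc_front n i' r' hi' hr'] at R2
        have hn := Complex.re_le_norm (kc (n+1) (4^n*i'+r') - kc (n+1) (4^n*i+r))
        rw [norm_sub_rev, Complex.sub_re] at hn
        have : (1/6 : ℝ) ≤ (kc (n+1) (4^n*i'+r')).re - (kc (n+1) (4^n*i+r)).re := by
          interval_cases i <;> interval_cases i' <;> simp at hgap R1 R2 ⊢ <;> linarith
        linarith
      · obtain rfl : i' = i + 1 := hadj.symm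
        have hc := corner i (by omega) _ _ hTa hTb
        have D : kc (n+1) (4^n*i+r) - kc (n+1) (4^n*(i+1)+r') =
            -(ke i * (1 - kc n r) + ke (i+1) * kc n r') := by
          rw [kc_front n i r hi hr, kc_front n (i+1) r' hi' hr', ks_succ i hi]; ring
        by_cases hk : k ≤ 4^n*(i+1)
        · right
          obtain ⟨s, rfl⟩ : ∃ s, k = 4^n * i + s := ⟨k - 4^n*i, by omega⟩
          have hs : s ≤ 4^n := by rw [mul_add] at hk; omega
          have he := end_one n s r (by omega) hs
          have D' : kc (n+1) (4^n*i+s) - kc (n+1) (4^n*(i+1)+r') =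
              -(ke i * (1 - kc n s) + ke (i+1) * kc n r') := by
            rw [kc_front n i s hi hs, kc_front n (i+1) r' hi' hr', ks_succ i hi]; ring
          rw [D, D', norm_neg, norm_neg]
          have := norm_add_le (ke i * (1 - kc n s)) (ke (i+1) * kc n r')
          rw [norm_mul, norm_mul, norm_ke, norm_ke] at this
          linarith [norm_nonneg (kc n r')]
        · left
          obtain ⟨s, rfl⟩ : ∃ s, k = 4^n * (i+1) + s := ⟨k - 4^n*(i+1), by omega⟩
          have he := end_zero n s r' (by omega) hr'
          have D' : kc (n+1) (4^n*(i+1)+s) - kc (n+1) (4^n*i+r) =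
              ke i * (1 - kc n r) + ke (i+1) * kc n s := by
            rw [kc_front n i r hi hr, kc_front n (i+1) s hi' (by omega), ks_succ i hi]; ring
          rw [D, D', norm_neg]
          have := norm_add_le (ke i * (1 - kc n r)) (ke (i+1) * kc n s)
          rw [norm_mul, norm_mul, norm_ke, norm_ke] at this
          linarith [norm_nonneg (1 - kc n r)]

/-- For every `t ≥ 1` there is a stage `n` of the Koch construction such that the path
graph `F_n` is a `6`-Hausdorff-spanner but not a `t`-spanner: (a) between any two vertices
the path between them stays within Hausdorff distance `6` times their distance from the
straight segment, while (b) every walk in `F_n` between the two extreme vertices is longer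
than `t` times their distance. -/
theorem koch_hausdorff_spanner_not_t_spanner (t : ℝ) (ht : 1 ≤ t) :
    ∃ n : ℕ,
      (∀ a b : ℕ, a < b → b ≤ 4 ^ n →
        Metric.hausdorffDist (⋃ k ∈ Finset.Ico a b, segment ℝ (koch n k) (koch n (k + 1)))
          (segment ℝ (koch n a) (koch n b)) ≤ 6 * dist (koch n a) (koch n b)) ∧
      (∀ m : ℕ, 1 ≤ m → ∀ q : Fin (m + 1) → ℕ,
        q 0 = 0 → q (Fin.last m) = 4 ^ n → (∀ j, q j ≤ 4 ^ n) →
        (∀ j : Fin m, q j.succ = q j.castSucc + 1 ∨ q j.castSucc = q j.succ + 1) →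
        t * dist (koch n 0) (koch n (4 ^ n)) <
          ∑ j : Fin m, dist (koch n (q j.castSucc)) (koch n (q j.succ))) := by
  obtain ⟨n, hn⟩ := pow_unbounded_of_one_lt t (show (1:ℝ) < 4/3 by norm_num)
  refine ⟨n, ?_, ?_⟩
  · intro a b hab hb
    have hd : 0 ≤ 6 * dist (koch n a) (koch n b) := by positivity
    set S := segment ℝ (koch n a) (koch n b) with hS
    have hcpt : IsCompact S := by
      rw [hS, ← convexHull_pair]
      exact (Set.toFinite _).isCompact_convexHull (𝕜 := ℝ)
    have haS : koch n a ∈ S := left_mem_segment _ _ _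
    have hbS : koch n b ∈ S := right_mem_segment _ _ _
    have hconv : Convex ℝ (Metric.cthickening (6 * dist (koch n a) (koch n b)) S) :=
      (convex_segment _ _).cthickening _
    have hv : ∀ k, a ≤ k → k ≤ b →
        koch n k ∈ Metric.cthickening (6 * dist (koch n a) (koch n b)) S := by
      intro k h1 h2
      rcases main_bound n a k b h1 h2 hb with h | h
      · exact Metric.mem_cthickening_of_dist_le _ _ _ _ haS (by rw [dist_kc, dist_kc]; exact h)
      · exact Metric.mem_cthickening_of_dist_le _ _ _ _ hbS (by rw [dist_kc, dist_kc]; exact h)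
    apply Metric.hausdorffDist_le_of_mem_dist hd
    · intro x hx
      simp only [Set.mem_iUnion, Finset.mem_Ico] at hx
      obtain ⟨k, ⟨h1, h2⟩, hx⟩ := hx
      have := hconv.segment_subset (hv k h1 h2.le) (hv (k+1) (by omega) h2) hx
      rw [hcpt.cthickening_eq_biUnion_closedBall hd] at this
      simpa [Set.mem_iUnion] using this
    · intro x hx
      refine ⟨koch n a, ?_, ?_⟩
      · simp only [Set.mem_iUnion, Finset.mem_Ico]
        exact ⟨a, ⟨le_rfl, hab⟩, left_mem_segment _ _ _⟩
      · have : x ∈ Metric.closedBall (koch n a) (dist (koch n a) (koch n b)) :=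
          (convex_closedBall _ _).segment_subset (by simp) (by simp [dist_comm]) hx
        have h2 := Metric.mem_closedBall.mp this
        linarith [dist_nonneg (x := koch n a) (y := koch n b)]
  · intro m hm q h0 hl hq hs
    have hstep : ∀ j : Fin m, dist (koch n (q j.castSucc)) (koch n (q j.succ)) = (1/3)^n := by
      intro j
      rw [dist_kc]
      rcases hs j with h | h
      · rw [h]; exact kc_edge n _ (by have := hq j.succ; omega)
      · rw [h, norm_sub_rev]; exact kc_edge n _ (by have := hq j.castSucc; omega)
    have hle : ∀ j : Fin (m+1), q j ≤ j := by
      intro j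
      induction j using Fin.induction with
      | zero => simp [h0]
      | succ j ih =>
        have := hs j
        simp only [Fin.val_castSucc, Fin.val_succ] at ih ⊢
        omega
    have hm4 : 4^n ≤ m := by simpa [hl] using hle (Fin.last m)
    have hm4' : (4:ℝ)^n ≤ m := by exact_mod_cast hm4
    rw [Finset.sum_congr rfl (fun j _ => hstep j), dist_kc, kc_at_zero, kc_at_end]
    simp only [zero_sub, norm_neg, norm_one, mul_one, Finset.sum_const, Finset.card_univ,
      Fintype.card_fin, nsmul_eq_mul]
    calc t < (4/3:ℝ)^n := hn
      _ = 4^n * (1/3)^n := by rw [← mul_pow]; norm_num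
      _ ≤ m * (1/3)^n := by gcongr
end

section
/- Let n ∈ ℕ and let a, b be indices with 0 ≤ a < b ≤ 4^n. If the level of the pair (a, b) in K_n equals i, then the polygonal path with vertices K_n a, K_n (a+1), …, K_n b admits a Fréchet matching to the segment from K_n a to K_n b within Real.sqrt 3 · 3^{1−i}. -/
/-- The uniform piecewise-linear parametrization of the polygonal path `p`:
on `[k/m, (k+1)/m]` it interpolates linearly from `p k` to `p (k+1)`. -/
noncomputable def polyParam {E : Type*} [NormedAddCommGroup E] [NormedSpace ℝ E]
    {m : ℕ} (p : Fin (m + 1) → E) (τ : ℝ) : E :=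
  let k : ℕ := min ⌊τ * m⌋₊ (m - 1)
  p ⟨min k m, Nat.lt_succ_of_le (min_le_right _ _)⟩ +
    (τ * m - (k : ℝ)) •
      (p ⟨min (k + 1) m, Nat.lt_succ_of_le (min_le_right _ _)⟩ -
        p ⟨min k m, Nat.lt_succ_of_le (min_le_right _ _)⟩)

/-- The polygonal path `p` admits a Fréchet matching to the segment from `u` to `v`
within `ε`: there are continuous monotone reparametrizations `φ, ψ` of `[0,1]`, fixing the
endpoints, such that at every time `τ` the point `γ_p (φ τ)` of the path and the point
`u + ψ τ • (v − u)` of the segment are at distance at most `ε`. -/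
def FrechetMatchingWithin {E : Type*} [NormedAddCommGroup E] [NormedSpace ℝ E]
    {m : ℕ} (p : Fin (m + 1) → E) (u v : E) (ε : ℝ) : Prop :=
  ∃ φ ψ : ℝ → ℝ,
    ContinuousOn φ (Set.Icc 0 1) ∧ ContinuousOn ψ (Set.Icc 0 1) ∧
    MonotoneOn φ (Set.Icc 0 1) ∧ MonotoneOn ψ (Set.Icc 0 1) ∧
    Set.MapsTo φ (Set.Icc 0 1) (Set.Icc 0 1) ∧ Set.MapsTo ψ (Set.Icc 0 1) (Set.Icc 0 1) ∧
    φ 0 = 0 ∧ ψ 0 = 0 ∧ φ 1 = 1 ∧ ψ 1 = 1 ∧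
    ∀ τ ∈ Set.Icc (0 : ℝ) 1, dist (polyParam p (φ τ)) (u + ψ τ • (v - u)) ≤ ε


/-- The level of the index `k` (with `0 ≤ k ≤ 4^n`) in `K_n`: the least `i ≤ n` such that
`4^(n−i)` divides `k`, i.e. such that `koch n k` is already a vertex of `K_i`. -/
noncomputable def kochLevel (n k : ℕ) : ℕ := sInf {i | i ≤ n ∧ 4 ^ (n - i) ∣ k}

/-- The level of the pair of indices `(a, b)`: the least `i` such that at least two indices
`k` with `a ≤ k ≤ b` have level at most `i`. -/
noncomputable def kochPairLevel (n a b : ℕ) : ℕ :=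
  sInf {i | ∃ k₁ k₂ : ℕ, a ≤ k₁ ∧ k₁ < k₂ ∧ k₂ ≤ b ∧ kochLevel n k₁ ≤ i ∧ kochLevel n k₂ ≤ i}

/-- Scaled rotation `√3 · ρ`, with `S (S v) = -3 v`. -/
noncomputable def kS (v : EuclideanSpace ℝ (Fin 2)) : EuclideanSpace ℝ (Fin 2) :=
  Real.sqrt 3 • rot90 v

lemma kS_comb (d : EuclideanSpace ℝ (Fin 2)) (x y : ℝ) :
    kS (x • d + y • kS d) = (-3 * y) • d + x • kS d := by
  have h3 : Real.sqrt 3 * Real.sqrt 3 = 3 := Real.mul_self_sqrt (by norm_num)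
  ext i
  fin_cases i
  · simp [kS, rot90, pt]
    linear_combination (-y * d 0) * h3
  · simp [kS, rot90, pt]
    linear_combination (-y * d 1) * h3

lemma kS_norm (d : EuclideanSpace ℝ (Fin 2)) (x y : ℝ) :
    ‖x • d + y • kS d‖ ^ 2 = (x ^ 2 + 3 * y ^ 2) * ‖d‖ ^ 2 := by
  have h3 : Real.sqrt 3 ^ 2 = 3 := Real.sq_sqrt (by norm_num)
  rw [EuclideanSpace.real_norm_sq_eq, EuclideanSpace.real_norm_sq_eq]
  simp [kS, rot90, pt, Fin.sum_univ_two]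
  linear_combination (y ^ 2 * (d 0 ^ 2 + d 1 ^ 2)) * h3

/-- The hull triangle over the segment from `P` in direction `d`. -/
def kT (P d : EuclideanSpace ℝ (Fin 2)) : Set (EuclideanSpace ℝ (Fin 2)) :=
  {z | ∃ x y : ℝ, 0 ≤ y ∧ 3 * y ≤ x ∧ 3 * y ≤ 1 - x ∧ z = P + (x • d + y • kS d)}

lemma kT_diam (P d z w : EuclideanSpace ℝ (Fin 2)) (hz : z ∈ kT P d) (hw : w ∈ kT P d) :
    dist z w ≤ ‖d‖ := by
  obtain ⟨x, y, h1, h2, h3, rfl⟩ := hz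
  obtain ⟨x', y', h1', h2', h3', rfl⟩ := hw
  have : P + (x • d + y • kS d) - (P + (x' • d + y' • kS d))
      = (x - x') • d + (y - y') • kS d := by module
  rw [dist_eq_norm, this]
  apply le_of_sq_le_sq _ (norm_nonneg _)
  rw [kS_norm]
  have key : (x - x') ^ 2 + 3 * (y - y') ^ 2 ≤ 1 := by
    have a1 : 3 * |y - y'| ≤ 1 - |x - x'| := by
      rcases abs_cases (y - y') with h | h <;> rcases abs_cases (x - x') with h' | h' <;>
        linarith
    rw [← sq_abs (x - x'), ← sq_abs (y - y')]
    nlinarith [abs_nonneg (x - x'), abs_nonneg (y - y')]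
  nlinarith [sq_nonneg ‖d‖]

lemma kT_sub (P d : EuclideanSpace ℝ (Fin 2)) (α β γ δ : ℝ)
    (h : ∀ x y : ℝ, 0 ≤ y → 3 * y ≤ x → 3 * y ≤ 1 - x →
      0 ≤ β + x * δ + y * γ ∧ 3 * (β + x * δ + y * γ) ≤ α + x * γ - 3 * y * δ ∧
      3 * (β + x * δ + y * γ) ≤ 1 - (α + x * γ - 3 * y * δ)) :
    kT (P + (α • d + β • kS d)) (γ • d + δ • kS d) ⊆ kT P d := by
  rintro z ⟨x, y, h1, h2, h3, rfl⟩
  obtain ⟨a, b, c⟩ := h x y h1 h2 h3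
  refine ⟨_, _, a, b, c, ?_⟩
  rw [kS_comb]
  module

/-- Edge vectors of the Koch polyline. -/
noncomputable def kE (n j : ℕ) : EuclideanSpace ℝ (Fin 2) := koch n (j + 1) - koch n j

lemma koch_sub (n j : ℕ) : ∃ α β γ δ : ℝ,
    koch (n + 1) j = koch n (j / 4) + (α • kE n (j / 4) + β • kS (kE n (j / 4))) ∧
    kE (n + 1) j = γ • kE n (j / 4) + δ • kS (kE n (j / 4)) ∧
    γ ^ 2 + 3 * δ ^ 2 = 1 / 9 ∧
    (∀ x y : ℝ, 0 ≤ y → 3 * y ≤ x → 3 * y ≤ 1 - x →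
      0 ≤ β + x * δ + y * γ ∧ 3 * (β + x * δ + y * γ) ≤ α + x * γ - 3 * y * δ ∧
      3 * (β + x * δ + y * γ) ≤ 1 - (α + x * γ - 3 * y * δ)) := by
  obtain ⟨q, r, hr, rfl⟩ : ∃ q r, r < 4 ∧ j = 4 * q + r :=
    ⟨j / 4, j % 4, Nat.mod_lt _ (by norm_num), by omega⟩
  have hq : (4 * q + r) / 4 = q := by omega
  have k0 : koch (n + 1) (4 * q) = koch n q := by
    simp [koch]
  have k1 : koch (n + 1) (4 * q + 1) = koch n q + (3 : ℝ)⁻¹ • kE n q := by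
    have h1 : (4 * q + 1) / 4 = q := by omega
    have h2 : (4 * q + 1) % 4 = 1 := by omega
    simp [koch, h1, h2, kE]
  have k2 : koch (n + 1) (4 * q + 2)
      = koch n q + ((1 / 2 : ℝ) • kE n q + (1 / 6 : ℝ) • kS (kE n q)) := by
    have h1 : (4 * q + 2) / 4 = q := by omega
    have h2 : (4 * q + 2) % 4 = 2 := by omega
    simp only [koch, h1, h2, kE, kS]
    norm_num
    module
  have k3 : koch (n + 1) (4 * q + 3) = koch n q + (2 / 3 : ℝ) • kE n q := by
    have h1 : (4 * q + 3) / 4 = q := by omega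
    have h2 : (4 * q + 3) % 4 = 3 := by omega
    simp [koch, h1, h2, kE]
  have k4 : koch (n + 1) (4 * q + 4) = koch n q + kE n q := by
    have h1 : (4 * q + 4) / 4 = q + 1 := by omega
    have h2 : (4 * q + 4) % 4 = 0 := by omega
    simp [koch, h1, kE]
  rw [hq]
  generalize hd : kE n q = d at *
  interval_cases r
  · refine ⟨0, 0, 1 / 3, 0, ?_, ?_, by norm_num, ?_⟩
    · rw [add_zero, k0]; module
    · rw [kE, add_zero, k0, k1]; module
    · intro x y h1 h2 h3; refine ⟨?_, ?_, ?_⟩ <;> linarith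
  · refine ⟨1 / 3, 0, 1 / 6, 1 / 6, ?_, ?_, by norm_num, ?_⟩
    · rw [k1]; module
    · rw [kE, k1, k2]; module
    · intro x y h1 h2 h3; refine ⟨?_, ?_, ?_⟩ <;> linarith
  · refine ⟨1 / 2, 1 / 6, 1 / 6, -1 / 6, ?_, ?_, by norm_num, ?_⟩
    · rw [k2]
    · rw [kE, k2, k3]; module
    · intro x y h1 h2 h3; refine ⟨?_, ?_, ?_⟩ <;> linarith
  · refine ⟨2 / 3, 0, 1 / 3, 0, ?_, ?_, by norm_num, ?_⟩
    · rw [k3]; module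
    · rw [kE, k3, k4]; module
    · intro x y h1 h2 h3; refine ⟨?_, ?_, ?_⟩ <;> linarith

lemma kE_norm (n j : ℕ) : ‖kE n j‖ ≤ (1 / 3 : ℝ) ^ n := by
  induction n generalizing j with
  | zero =>
    have h : ‖pt 1 0 - pt 0 0‖ = 1 := by
      simp [pt, EuclideanSpace.norm_eq, Fin.sum_univ_two]
    by_cases hj : j = 0
    · subst hj; simp [kE, koch, h]
    · simp [kE, koch, hj]
  | succ n ih =>
    obtain ⟨α, β, γ, δ, -, h2, h3, -⟩ := koch_sub n j
    have h4 : ‖kE (n + 1) j‖ = 1 / 3 * ‖kE n (j / 4)‖ := by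
      rw [← sq_eq_sq₀ (norm_nonneg _) (by positivity), h2, kS_norm, h3]; ring
    rw [h4, pow_succ]
    linarith [ih (j / 4)]

lemma kT_nest (n m j : ℕ) :
    kT (koch (n + m) j) (kE (n + m) j) ⊆ kT (koch n (j / 4 ^ m)) (kE n (j / 4 ^ m)) := by
  induction m generalizing j with
  | zero => simp
  | succ m ih =>
    obtain ⟨α, β, γ, δ, h1, h2, -, h4⟩ := koch_sub (n + m) j
    rw [← add_assoc, h1, h2]
    refine (kT_sub _ _ _ _ _ _ h4).trans ?_
    have := ih (j / 4)
    rwa [Nat.div_div_eq_div_mul, ← pow_succ'] at this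

lemma koch_mem (n m q k : ℕ) (h1 : q * 4 ^ m ≤ k) (h2 : k ≤ (q + 1) * 4 ^ m) :
    koch (n + m) k ∈ kT (koch n q) (kE n q) := by
  have hpos : 0 < 4 ^ m := by positivity
  rcases h2.lt_or_eq with h | h
  · have hq : k / 4 ^ m = q := Nat.div_eq_of_lt_le h1 h
    have := kT_nest n m k
    rw [hq] at this
    exact this ⟨0, 0, le_refl _, by norm_num, by norm_num, by simp⟩
  · obtain ⟨l, rfl⟩ : ∃ l, k = l + 1 := by
      refine ⟨k - 1, ?_⟩
      have : 0 < (q + 1) * 4 ^ m := by positivity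
      omega
    have hq : l / 4 ^ m = q := by
      apply Nat.div_eq_of_lt_le
      · rw [add_mul] at h; omega
      · omega
    have := kT_nest n m l
    rw [hq] at this
    exact this ⟨1, 0, le_refl _, by norm_num, by norm_num, by simp [kE]⟩

lemma koch_dist (n m q k l : ℕ) (h1 : q * 4 ^ m ≤ k) (h2 : k ≤ (q + 1) * 4 ^ m)
    (h3 : q * 4 ^ m ≤ l) (h4 : l ≤ (q + 1) * 4 ^ m) :
    dist (koch (n + m) k) (koch (n + m) l) ≤ (1 / 3 : ℝ) ^ n :=
  (kT_diam _ _ _ _ (koch_mem n m q k h1 h2) (koch_mem n m q l h3 h4)).trans (kE_norm n q)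

lemma koch_sum (n m a b j : ℕ) (ha : a ≤ j) (hb : j ≤ b)
    (h : b ≤ (a / 4 ^ m + 2) * 4 ^ m) :
    dist (koch (n + m) j) (koch (n + m) a) + dist (koch (n + m) j) (koch (n + m) b)
      ≤ 3 * (1 / 3 : ℝ) ^ n := by
  have hpos : 0 < 4 ^ m := by positivity
  have e1 : a / 4 ^ m * 4 ^ m ≤ a := Nat.div_mul_le_self _ _
  have e2 : a < (a / 4 ^ m + 1) * 4 ^ m := by
    rw [mul_comm]; exact Nat.lt_mul_div_succ _ hpos
  generalize a / 4 ^ m = q at *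
  have e3 : (q + 1) * 4 ^ m ≤ (q + 2) * 4 ^ m := Nat.mul_le_mul_right _ (by omega)
  have e4 : q * 4 ^ m ≤ (q + 1) * 4 ^ m := Nat.mul_le_mul_right _ (by omega)
  have e5 : (q + 1 + 1) * 4 ^ m = (q + 2) * 4 ^ m := rfl
  have hp : (0 : ℝ) ≤ (1 / 3 : ℝ) ^ n := by positivity
  rcases le_total b ((q + 1) * 4 ^ m) with hc | hc
  · have := koch_dist n m q j a (by omega) (by omega) (by omega) (by omega)
    have := koch_dist n m q j b (by omega) (by omega) (by omega) (by omega)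
    linarith
  · have s1 := koch_dist n m q ((q + 1) * 4 ^ m) a (by omega) (by omega) (by omega) (by omega)
    have s2 := koch_dist n m (q + 1) ((q + 1) * 4 ^ m) b (by omega) (by omega) (by omega) (by omega)
    rcases le_total j ((q + 1) * 4 ^ m) with hj | hj
    · have s3 := koch_dist n m q j a (by omega) (by omega) (by omega) (by omega)
      have s4 := koch_dist n m q j ((q + 1) * 4 ^ m) (by omega) (by omega) (by omega) (by omega)
      have := dist_triangle (koch (n + m) j) (koch (n + m) ((q + 1) * 4 ^ m)) (koch (n + m) b)
      linarith
    · have s3 := koch_dist n m (q + 1) j b (by omega) (by omega) (by omega) (by omega)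
      have s4 := koch_dist n m (q + 1) j ((q + 1) * 4 ^ m) (by omega) (by omega) (by omega)
        (by omega)
      have := dist_triangle (koch (n + m) j) (koch (n + m) ((q + 1) * 4 ^ m)) (koch (n + m) a)
      linarith

lemma polyParam_zero' {E : Type*} [NormedAddCommGroup E] [NormedSpace ℝ E]
    {m : ℕ} (p : Fin (m + 1) → E) : polyParam p 0 = p 0 := by
  simp [polyParam]

lemma polyParam_one' {E : Type*} [NormedAddCommGroup E] [NormedSpace ℝ E]
    {m : ℕ} (p : Fin (m + 1) → E) : polyParam p 1 = p (Fin.last m) := by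
  rcases m with _ | m
  · simp [polyParam]
  · simp only [polyParam, one_mul, Nat.floor_natCast]
    have h1 : min (m + 1) (m + 1 - 1) = m := by omega
    simp only [h1]
    have h2 : min m (m + 1) = m := by omega
    have h3 : min (m + 1) (m + 1) = m + 1 := by omega
    simp only [h2, h3]
    push_cast
    simp [Fin.last]

lemma polyParam_mem {E : Type*} [NormedAddCommGroup E] [NormedSpace ℝ E]
    {m : ℕ} (hm : 0 < m) (p : Fin (m + 1) → E) (s : Set E) (hs : Convex ℝ s)
    (hp : ∀ j, p j ∈ s) (t : ℝ) (h0 : 0 ≤ t) (h1 : t ≤ 1) : polyParam p t ∈ s := by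
  simp only [polyParam]
  apply hs.add_smul_sub_mem (hp _) (hp _)
  have hm' : (0 : ℝ) < m := by exact_mod_cast hm
  have hf := Nat.floor_le (show 0 ≤ t * m by positivity)
  have hf' := Nat.lt_floor_add_one (t * m)
  constructor
  · have : ((min ⌊t * m⌋₊ (m - 1) : ℕ) : ℝ) ≤ (⌊t * m⌋₊ : ℝ) := by
      exact_mod_cast min_le_left _ _
    linarith
  · rcases le_total ⌊t * m⌋₊ (m - 1) with h | h
    · rw [min_eq_left h]; linarith
    · rw [min_eq_right h, Nat.cast_sub (by omega)]
      push_cast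
      nlinarith

lemma frechet_of_mid {E : Type*} [NormedAddCommGroup E] [NormedSpace ℝ E]
    {m : ℕ} (hm : 0 < m) (p : Fin (m + 1) → E) (u v : E) (ε : ℝ)
    (hu : p 0 = u) (hv : p (Fin.last m) = v)
    (H : ∀ j, dist (p j) u + dist (p j) v ≤ 2 * ε) : FrechetMatchingWithin p u v ε := by
  have key : ∀ j, p j ∈ Metric.closedBall (u + (1 / 2 : ℝ) • (v - u)) ε := by
    intro j
    rw [Metric.mem_closedBall, dist_eq_norm]
    have e : p j - (u + (1 / 2 : ℝ) • (v - u))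
        = (1 / 2 : ℝ) • (p j - u) + (1 / 2 : ℝ) • (p j - v) := by module
    rw [e]
    refine (norm_add_le _ _).trans ?_
    rw [norm_smul, norm_smul, ← dist_eq_norm, ← dist_eq_norm]
    norm_num
    linarith [H j]
  have huv : ‖v - u‖ ≤ 2 * ε := by
    have := H 0
    rw [hu, dist_self, dist_comm, dist_eq_norm] at this
    linarith
  refine ⟨fun t => max 0 (min 1 (3 * t - 1)),
    fun t => (min 1 (3 * t) + max 0 (3 * t - 2)) / 2,
    by fun_prop, by fun_prop, ?_, ?_, ?_, ?_, by norm_num, by norm_num, by norm_num, by norm_num,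
    ?_⟩
  · intro x _ y _ hxy
    dsimp only
    gcongr
  · intro x _ y _ hxy
    dsimp only
    gcongr
  · rintro t ⟨h0, h1⟩
    exact ⟨le_max_left _ _, max_le (by norm_num) (min_le_left _ _)⟩
  · rintro t ⟨h0, h1⟩
    dsimp only
    rcases le_total 1 (3 * t) with h | h <;> rcases le_total 0 (3 * t - 2) with h' | h' <;>
      simp only [h, h', min_eq_left, min_eq_right, max_eq_left, max_eq_right] <;>
      constructor <;> linarith
  · rintro t ⟨h0, h1⟩
    dsimp only
    rcases le_total t (1 / 3) with h | h
    · have e1 : max 0 (min 1 (3 * t - 1)) = 0 := by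
        rw [max_eq_left]; exact (min_le_right _ _).trans (by linarith)
      rw [e1, polyParam_zero', hu, min_eq_right (by linarith), max_eq_left (by linarith),
        dist_eq_norm]
      have : u - (u + ((3 * t + 0) / 2) • (v - u)) = -(((3 * t + 0) / 2) • (v - u)) := by module
      rw [this, norm_neg, norm_smul, Real.norm_eq_abs, abs_of_nonneg (by linarith)]
      nlinarith [norm_nonneg (v - u)]
    rcases le_total t (2 / 3) with h' | h'
    · rw [min_eq_left (by linarith : (1 : ℝ) ≤ 3 * t), max_eq_left (by linarith : 3 * t - 2 ≤ 0)]
      have := polyParam_mem hm p _ (convex_closedBall _ _) key (max 0 (min 1 (3 * t - 1)))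
        (le_max_left _ _) (max_le (by norm_num) (min_le_left _ _))
      rw [Metric.mem_closedBall] at this
      simpa using this
    · have e1 : max 0 (min 1 (3 * t - 1)) = 1 := by
        rw [min_eq_left (by linarith)]; norm_num
      rw [e1, polyParam_one', hv, min_eq_left (by linarith), max_eq_right (by linarith),
        dist_eq_norm]
      have : v - (u + ((1 + (3 * t - 2)) / 2) • (v - u))
          = ((3 - 3 * t) / 2) • (v - u) := by module
      rw [this, norm_smul, Real.norm_eq_abs, abs_of_nonneg (by linarith)]
      nlinarith [norm_nonneg (v - u)]

/-- If the pair of indices `(a, b)` has level `i` in `K_n`, then the polygonal path with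
vertices `koch n a, …, koch n b` admits a Fréchet matching to the segment joining its
endpoints within `√3 · 3^(1−i)`. -/
theorem koch_frechet_upper_bound (n a b i : ℕ) (hab : a < b) (hb : b ≤ 4 ^ n)
    (hi : kochPairLevel n a b = i) :
    FrechetMatchingWithin (m := b - a) (fun j => koch n (a + j)) (koch n a) (koch n b)
      (Real.sqrt 3 * (3 : ℝ) ^ ((1 : ℤ) - (i : ℤ))) := by
  have h3 : (3 / 2 : ℝ) ≤ Real.sqrt 3 := by
    apply Real.le_sqrt_of_sq_le; norm_num
  apply frechet_of_mid (by omega)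
  · simp
  · simp only [Fin.val_last]; congr 1; omega
  rintro ⟨j, hj⟩
  dsimp only
  rcases i with _ | i
  · have := koch_sum 0 n a b (a + j) (by omega) (by omega) (by
      refine hb.trans ?_
      have : 0 < 4 ^ n := by positivity
      nlinarith [Nat.zero_le (a / 4 ^ n)])
    simp only [zero_add, pow_zero] at this
    simp
    linarith
  · have lev : ∀ i k, i ≤ n → 4 ^ (n - i) ∣ k → kochLevel n k ≤ i :=
      fun i k h1 h2 => Nat.sInf_le ⟨h1, h2⟩
    have hin : i + 1 ≤ n := by
      rw [← hi]
      exact Nat.sInf_le ⟨a, b, le_refl _, hab, le_refl _, lev n a le_rfl (by simp),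
        lev n b le_rfl (by simp)⟩
    obtain ⟨m, rfl⟩ : ∃ m, n = i + m := ⟨n - i, by omega⟩
    have hpos : 0 < 4 ^ m := by positivity
    have hbd : b ≤ (a / 4 ^ m + 2) * 4 ^ m := by
      by_contra hcon
      have e2 : a < (a / 4 ^ m + 1) * 4 ^ m := by
        rw [mul_comm]; exact Nat.lt_mul_div_succ _ hpos
      have hm : i + m - i = m := by omega
      have : kochPairLevel (i + m) a b ≤ i := by
        refine Nat.sInf_le ⟨(a / 4 ^ m + 1) * 4 ^ m, (a / 4 ^ m + 2) * 4 ^ m, e2.le, ?_,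
          by omega, lev _ _ (by omega) ?_, lev _ _ (by omega) ?_⟩
        · exact Nat.mul_lt_mul_of_pos_right (by omega) hpos
        · rw [hm]; exact Dvd.intro_left _ rfl
        · rw [hm]; exact Dvd.intro_left _ rfl
      omega
    have := koch_sum i m a b (a + j) (by omega) (by omega) hbd
    have e : (3 : ℝ) ^ ((1 : ℤ) - ((i + 1 : ℕ) : ℤ)) = (1 / 3 : ℝ) ^ i := by
      have : (1 : ℤ) - ((i + 1 : ℕ) : ℤ) = -(i : ℤ) := by push_cast; ring
      rw [this, zpow_neg, zpow_natCast, one_div, inv_pow]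
    rw [e]
    have hp : (0 : ℝ) ≤ (1 / 3 : ℝ) ^ i := by positivity
    nlinarith
end

section
/- For every real t ≥ 1 there exists n ∈ ℕ such that: (a) for all indices 0 ≤ a < b ≤ 4^n, the polygonal path with vertices K_n a, K_n (a+1), …, K_n b admits a Fréchet matching to the segment from K_n a to K_n b within 6 · dist (K_n a) (K_n b); and (b) for every m ≥ 1 and every sequence of indices q : Fin (m+1) → ℕ with q 0 = 0, q m = 4^n, q j ≤ 4^n for all j, and |q (j+1) − q j| = 1 for all j < m, the length ∑_{j<m} dist (K_n (q j)) (K_n (q (j+1))) exceeds t · dist (K_n 0) (K_n (4^n)). In particular the Koch path graph F_n is a 6-Fréchet-spanner but not a t-spanner. -/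
namespace KochAux

/-- Relative position of the new vertices. -/
noncomputable def mm (r : ℕ) : ℂ :=
  if r = 0 then 0 else if r = 1 then 1 / 3
  else if r = 2 then ⟨1 / 2, Real.sqrt 3 / 6⟩ else 2 / 3

/-- Linear part of the four similarities. -/
noncomputable def cc (r : ℕ) : ℂ :=
  if r = 0 then 1 / 3 else if r = 1 then ⟨1 / 6, Real.sqrt 3 / 6⟩
  else if r = 2 then ⟨1 / 6, - (Real.sqrt 3 / 6)⟩ else 1 / 3

/-- Complex version of the Koch vertices. -/
noncomputable def kc : ℕ → ℕ → ℂ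
  | 0, k => if k = 0 then 0 else 1
  | n + 1, j => kc n (j / 4) + mm (j % 4) * (kc n (j / 4 + 1) - kc n (j / 4))

/-- The four similarities. -/
noncomputable def ff (i : ℕ) (z : ℂ) : ℂ := mm i + cc i * z

lemma koch_coord (n k : ℕ) : (koch n k) 0 = (kc n k).re ∧ (koch n k) 1 = (kc n k).im := by
  induction n generalizing k with
  | zero =>
    by_cases h : k = 0 <;> simp [koch, kc, h, pt]
  | succ n ih =>
    have h1 := ih (k / 4)
    have h2 := ih (k / 4 + 1)
    have h3 : k % 4 = 0 ∨ k % 4 = 1 ∨ k % 4 = 2 ∨ k % 4 = 3 := by omega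
    rcases h3 with h | h | h | h <;>
      simp [koch, kc, h, pt, rot90, mm, h1.1, h1.2, h2.1, h2.2] <;>
      constructor <;> ring

lemma dist_koch (n a b : ℕ) : dist (koch n a) (koch n b) = ‖kc n a - kc n b‖ := by
  rw [EuclideanSpace.dist_eq, ← Complex.dist_eq, Complex.dist_eq_re_im]
  simp [koch_coord, Fin.sum_univ_two, Real.dist_eq, sq_abs]

lemma kc_decomp (n i r : ℕ) (hi : i < 4) (hr : r ≤ 4 ^ n) :
    kc (n + 1) (i * 4 ^ n + r) = ff i (kc n r) := by
  induction n generalizing r with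
  | zero =>
    have hr' : r = 0 ∨ r = 1 := by
      simp at hr; omega
    interval_cases i <;> rcases hr' with rfl | rfl <;>
      simp [kc, ff, mm, cc, Complex.ext_iff] <;> norm_num
  | succ n ih =>
    have e1 : (i * 4 ^ (n + 1) + r) / 4 = i * 4 ^ n + r / 4 := by
      rw [pow_succ, ← mul_assoc]; omega
    have e2 : (i * 4 ^ (n + 1) + r) % 4 = r % 4 := by
      rw [pow_succ, ← mul_assoc]; omega
    have hp : (4:ℕ) ^ (n + 1) = 4 * 4 ^ n := by ring
    have h0 := ih (r / 4) (by omega)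
    have l : kc (n + 1 + 1) (i * 4 ^ (n + 1) + r) = kc (n + 1) (i * 4 ^ n + r / 4) +
        mm (r % 4) * (kc (n + 1) (i * 4 ^ n + r / 4 + 1) - kc (n + 1) (i * 4 ^ n + r / 4)) := by
      rw [← e1, ← e2]; rfl
    have l' : kc (n + 1) r = kc n (r / 4) +
        mm (r % 4) * (kc n (r / 4 + 1) - kc n (r / 4)) := rfl
    rw [l, h0, l']
    by_cases h : r = 4 ^ (n + 1)
    · have : r % 4 = 0 := by omega
      simp [this, mm]
    · have h1 := ih (r / 4 + 1) (by omega)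
      rw [add_assoc, h1]
      simp only [ff]; ring

/-- membership in the triangle, in the coordinates `x`, `√3 y`. -/
def InT (z : ℂ) : Prop :=
  0 ≤ Real.sqrt 3 * z.im ∧ Real.sqrt 3 * z.im ≤ z.re ∧ Real.sqrt 3 * z.im ≤ 1 - z.re

lemma s3 : Real.sqrt 3 * Real.sqrt 3 = 3 := Real.mul_self_sqrt (by norm_num)

lemma ff0_re (z : ℂ) : (ff 0 z).re = z.re / 3 := by
  simp [ff, mm, cc]; ring
lemma ff0_im (z : ℂ) : Real.sqrt 3 * (ff 0 z).im = Real.sqrt 3 * z.im / 3 := by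
  simp [ff, mm, cc]; ring
lemma ff1_re (z : ℂ) : (ff 1 z).re = 1 / 3 + z.re / 6 - Real.sqrt 3 * z.im / 6 := by
  simp [ff, mm, cc]; ring
lemma ff1_im (z : ℂ) : Real.sqrt 3 * (ff 1 z).im = z.re / 2 + Real.sqrt 3 * z.im / 6 := by
  simp [ff, mm, cc]; linear_combination (z.re / 6) * s3
lemma ff2_re (z : ℂ) : (ff 2 z).re = 1 / 2 + z.re / 6 + Real.sqrt 3 * z.im / 6 := by
  simp [ff, mm, cc]; ring
lemma ff2_im (z : ℂ) :
    Real.sqrt 3 * (ff 2 z).im = 1 / 2 - z.re / 2 + Real.sqrt 3 * z.im / 6 := by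
  simp [ff, mm, cc]; linear_combination (1 / 6 - z.re / 6) * s3
lemma ff3_re (z : ℂ) : (ff 3 z).re = 2 / 3 + z.re / 3 := by
  simp [ff, mm, cc]; ring
lemma ff3_im (z : ℂ) : Real.sqrt 3 * (ff 3 z).im = Real.sqrt 3 * z.im / 3 := by
  simp [ff, mm, cc]; ring

lemma norm_cc (i : ℕ) : ‖cc i‖ = 1 / 3 := by
  have h : ‖cc i‖ ^ 2 = (1 / 3) ^ 2 := by
    rw [Complex.sq_norm, Complex.normSq_apply]
    have := s3
    unfold cc
    split_ifs <;> norm_num <;> linarith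
  exact (pow_left_inj₀ (norm_nonneg _) (by norm_num) (by norm_num)).1 h

lemma norm_ff (i : ℕ) (z w : ℂ) : ‖ff i z - ff i w‖ = ‖z - w‖ / 3 := by
  have : ff i z - ff i w = cc i * (z - w) := by simp only [ff]; ring
  rw [this, norm_mul, norm_cc]; ring

lemma split4 (N k : ℕ) (hk : k ≤ 4 * N) :
    (∃ r ≤ N, k = 0 * N + r) ∨ (∃ r ≤ N, k = 1 * N + r) ∨ (∃ r ≤ N, k = 2 * N + r) ∨
      (∃ r ≤ N, k = 3 * N + r) := by
  by_cases h1 : k ≤ N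
  · exact Or.inl ⟨k, h1, by omega⟩
  by_cases h2 : k ≤ 2 * N
  · exact Or.inr (Or.inl ⟨k - N, by omega, by omega⟩)
  by_cases h3 : k ≤ 3 * N
  · exact Or.inr (Or.inr (Or.inl ⟨k - 2 * N, by omega, by omega⟩))
  · exact Or.inr (Or.inr (Or.inr ⟨k - 3 * N, by omega, by omega⟩))

lemma kc_inT (n k : ℕ) (hk : k ≤ 4 ^ n) : InT (kc n k) := by
  induction n generalizing k with
  | zero => by_cases h : k = 0 <;> simp [kc, h, InT]
  | succ n ih =>
    rw [pow_succ, mul_comm] at hk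
    rcases split4 _ _ hk with ⟨r, hr, rfl⟩ | ⟨r, hr, rfl⟩ | ⟨r, hr, rfl⟩ | ⟨r, hr, rfl⟩ <;>
      obtain ⟨h1, h2, h3⟩ := ih r hr <;>
      rw [kc_decomp n _ r (by norm_num) hr] <;> unfold InT <;>
      simp only [ff0_re, ff0_im, ff1_re, ff1_im, ff2_re, ff2_im, ff3_re, ff3_im] <;>
      refine ⟨?_, ?_, ?_⟩ <;> linarith

lemma normsq (z : ℂ) : ‖z‖ ^ 2 = z.re ^ 2 + (Real.sqrt 3 * z.im) ^ 2 / 3 := by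
  rw [Complex.sq_norm, Complex.normSq_apply]; linear_combination (-(z.im ^ 2) / 3) * s3

lemma diamT {z w : ℂ} (hz : InT z) (hw : InT w) : ‖z - w‖ ≤ 1 := by
  have h := normsq (z - w)
  obtain ⟨h1, h2, h3⟩ := hz
  obtain ⟨k1, k2, k3⟩ := hw
  simp only [Complex.sub_re, Complex.sub_im, mul_sub] at h
  have : ‖z - w‖ ^ 2 ≤ 1 := by
    rw [h]
    generalize Real.sqrt 3 * z.im = Y at *
    generalize Real.sqrt 3 * w.im = V at *
    have key : ∀ x d : ℝ, 0 ≤ x → x ≤ 1 → -(1 - x) ≤ d → d ≤ 1 - x → x ^ 2 + d ^ 2 / 3 ≤ 1 := by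
      intro x d a1 a2 a3 a4
      nlinarith [mul_nonneg (sub_nonneg.2 a3) (sub_nonneg.2 a4)]
    rcases le_total z.re w.re with hh | hh
    · have := key (w.re - z.re) (V - Y) (by linarith) (by linarith) (by linarith) (by linarith)
      nlinarith
    · exact key (z.re - w.re) (Y - V) (by linarith) (by linarith) (by linarith) (by linarith)
  nlinarith [norm_nonneg (z - w)]

lemma re_le (z w : ℂ) (d : ℝ) (h : d ≤ w.re - z.re) : d ≤ ‖z - w‖ := by
  rw [norm_sub_rev]
  exact h.trans ((le_abs_self _).trans (by simpa using Complex.abs_re_le_norm (w - z)))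

lemma kc_zero (n : ℕ) : kc n 0 = 0 := by
  induction n with
  | zero => simp [kc]
  | succ n ih => simp [kc, mm, ih]

lemma kc_last (n : ℕ) : kc n (4 ^ n) = 1 := by
  induction n with
  | zero => simp [kc]
  | succ n ih =>
    have : 4 ^ (n + 1) = 3 * 4 ^ n + 4 ^ n := by ring
    rw [this, kc_decomp n 3 _ (by norm_num) le_rfl, ih]
    simp [ff, mm, cc]; norm_num

lemma right_end (n a c : ℕ) (hac : a ≤ c) (hc : c ≤ 4 ^ n) :
    ‖kc n a - kc n c‖ ≤ 3 * ‖kc n a - 1‖ := by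
  induction n generalizing a c with
  | zero =>
    have : (a = 0 ∧ c = 0) ∨ (a = 0 ∧ c = 1) ∨ (a = 1 ∧ c = 1) := by simp at hc; omega
    rcases this with ⟨rfl, rfl⟩ | ⟨rfl, rfl⟩ | ⟨rfl, rfl⟩ <;> simp [kc]
  | succ n ih =>
    have hd := diamT (kc_inT (n + 1) a (hac.trans hc)) (kc_inT (n + 1) c hc)
    have hf : ff 3 1 = 1 := by simp [ff, mm, cc]; norm_num
    rw [pow_succ, mul_comm] at hc
    by_cases ha : a ≤ 3 * 4 ^ n
    · have : (1 / 3 : ℝ) ≤ ‖kc (n + 1) a - 1‖ := by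
        apply re_le
        rw [Complex.one_re]
        rcases split4 _ _ (hac.trans hc) with ⟨r, hr, rfl⟩ | ⟨r, hr, rfl⟩ | ⟨r, hr, rfl⟩ |
            ⟨r, hr, rfl⟩ <;>
          obtain ⟨h1, h2, h3⟩ := kc_inT n r hr <;>
          rw [kc_decomp n _ r (by norm_num) hr] <;>
          simp only [ff0_re, ff1_re, ff2_re, ff3_re]
        · linarith
        · linarith
        · linarith
        · have : r = 0 := by omega
          simp [this, kc_zero]; norm_num
      linarith
    · obtain ⟨r, rfl⟩ : ∃ r, a = 3 * 4 ^ n + r := ⟨a - 3 * 4 ^ n, by omega⟩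
      obtain ⟨u, rfl⟩ : ∃ r, c = 3 * 4 ^ n + r := ⟨c - 3 * 4 ^ n, by omega⟩
      rw [kc_decomp n 3 r (by norm_num) (by omega), kc_decomp n 3 u (by norm_num) (by omega),
        ← hf, norm_ff, norm_ff]
      have := ih r u (by omega) (by omega)
      linarith

lemma left_end (n c b : ℕ) (hcb : c ≤ b) (hb : b ≤ 4 ^ n) :
    ‖0 - kc n c‖ ≤ 3 * ‖0 - kc n b‖ := by
  induction n generalizing c b with
  | zero =>
    have : (c = 0 ∧ b = 0) ∨ (c = 0 ∧ b = 1) ∨ (c = 1 ∧ b = 1) := by simp at hb; omega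
    rcases this with ⟨rfl, rfl⟩ | ⟨rfl, rfl⟩ | ⟨rfl, rfl⟩ <;> simp [kc]
  | succ n ih =>
    have h0 := kc_inT (n + 1) 0 (by simp)
    rw [kc_zero] at h0
    have hd := diamT h0 (kc_inT (n + 1) c (hcb.trans hb))
    have hf : ff 0 0 = 0 := by simp [ff, mm]
    rw [pow_succ, mul_comm] at hb
    by_cases h : 4 ^ n ≤ b
    · have : (1 / 3 : ℝ) ≤ ‖0 - kc (n + 1) b‖ := by
        apply re_le
        rw [Complex.zero_re]
        rcases split4 _ _ hb with ⟨r, hr, rfl⟩ | ⟨r, hr, rfl⟩ | ⟨r, hr, rfl⟩ |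
            ⟨r, hr, rfl⟩ <;>
          obtain ⟨h1, h2, h3⟩ := kc_inT n r hr <;>
          rw [kc_decomp n _ r (by norm_num) hr] <;>
          simp only [ff0_re, ff1_re, ff2_re, ff3_re]
        · have : r = 4 ^ n := by omega
          simp [this, kc_last]
        · linarith
        · linarith
        · linarith
      linarith
    · have e := kc_decomp n 0 c (by norm_num) (by omega)
      have e' := kc_decomp n 0 b (by norm_num) (by omega)
      rw [zero_mul, zero_add] at e e'
      rw [e, e', ← hf, norm_ff, norm_ff]
      have := ih c b (by omega) (by omega)
      linarith

/-- Two vectors at angle at least 60 degrees. -/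
lemma sep (P Q : ℂ) (a A b B : ℝ) (ha : P.re = a) (hA : Real.sqrt 3 * P.im = A)
    (hb : Q.re = b) (hB : Real.sqrt 3 * Q.im = B)
    (h : 3 * (a * b) + A * B ≤ |A * b - a * B|) : ‖P‖ + ‖Q‖ ≤ 2 * ‖P - Q‖ := by
  have hP := normsq P
  have hQ := normsq Q
  have hPQ := normsq (P - Q)
  simp only [Complex.sub_re, Complex.sub_im, mul_sub, ha, hA, hb, hB] at hP hQ hPQ
  have p0 := norm_nonneg P
  have q0 := norm_nonneg Q
  have pq0 := norm_nonneg (P - Q)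
  generalize ‖P‖ = x at *
  generalize ‖Q‖ = y at *
  generalize ‖P - Q‖ = z at *
  have key : 2 * (a * b + A * B / 3) ≤ x * y := by
    by_contra hc
    push Not at hc
    have hxy : 0 ≤ x * y := mul_nonneg p0 q0
    have h1 : (x * y) ^ 2 < (2 * (a * b + A * B / 3)) ^ 2 := by nlinarith
    have h2 : (3 * (a * b) + A * B) ^ 2 ≤ (A * b - a * B) ^ 2 := by
      rw [← sq_abs (A * b - a * B)]
      exact pow_le_pow_left₀ (by linarith) h 2
    have h3 : (x * y) ^ 2 = (a * b + A * B / 3) ^ 2 + (A * b - a * B) ^ 2 / 3 := by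
      rw [mul_pow, hP, hQ]; ring
    nlinarith
  have : (x + y) ^ 2 ≤ (2 * z) ^ 2 := by
    nlinarith [sq_nonneg (x - y)]
  exact (pow_le_pow_iff_left₀ (by linarith) (by linarith) (by norm_num)).1 this

lemma sep01 {z w : ℂ} (hz : InT z) (hw : InT w) :
    ‖ff 0 z - ff 0 1‖ + ‖ff 1 0 - ff 1 w‖ ≤ 2 * ‖ff 0 z - ff 1 w‖ := by
  obtain ⟨h1, h2, h3⟩ := hz
  obtain ⟨k1, k2, k3⟩ := hw
  have e : ff 0 1 = ff 1 0 := by simp [ff, mm, cc]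
  have := sep (ff 0 z - ff 0 1) (ff 1 w - ff 1 0) _ _ _ _ rfl rfl rfl rfl ?_
  · rw [norm_sub_rev (ff 1 0)]
    convert this using 3
    rw [e]; ring
  · refine le_trans ?_ (le_abs_self _)
    simp only [Complex.sub_re, Complex.sub_im, mul_sub, ff0_re, ff0_im, ff1_re, ff1_im,
      Complex.one_re, Complex.one_im, Complex.zero_re, Complex.zero_im]
    generalize Real.sqrt 3 * z.im = Y at *
    generalize Real.sqrt 3 * w.im = V at *
    nlinarith [mul_nonneg h1 k1, mul_nonneg h1 (sub_nonneg.2 k2),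
      mul_nonneg (sub_nonneg.2 h3) k1, mul_nonneg (sub_nonneg.2 h3) (sub_nonneg.2 k2)]

lemma sep12 {z w : ℂ} (hz : InT z) (hw : InT w) :
    ‖ff 1 z - ff 1 1‖ + ‖ff 2 0 - ff 2 w‖ ≤ 2 * ‖ff 1 z - ff 2 w‖ := by
  obtain ⟨h1, h2, h3⟩ := hz
  obtain ⟨k1, k2, k3⟩ := hw
  have e : ff 1 1 = ff 2 0 := by simp [ff, mm, cc, Complex.ext_iff]; norm_num
  have := sep (ff 1 z - ff 1 1) (ff 2 w - ff 2 0) _ _ _ _ rfl rfl rfl rfl ?_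
  · rw [norm_sub_rev (ff 2 0)]
    convert this using 3
    rw [e]; ring
  · refine le_trans ?_ (neg_le_abs _)
    simp only [Complex.sub_re, Complex.sub_im, mul_sub, ff2_re, ff2_im, ff1_re, ff1_im,
      Complex.one_re, Complex.one_im, Complex.zero_re, Complex.zero_im]
    generalize Real.sqrt 3 * z.im = Y at *
    generalize Real.sqrt 3 * w.im = V at *
    nlinarith [mul_nonneg h1 k1, mul_nonneg h1 (sub_nonneg.2 k2),
      mul_nonneg (sub_nonneg.2 h3) k1, mul_nonneg (sub_nonneg.2 h3) (sub_nonneg.2 k2)]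

lemma sep23 {z w : ℂ} (hz : InT z) (hw : InT w) :
    ‖ff 2 z - ff 2 1‖ + ‖ff 3 0 - ff 3 w‖ ≤ 2 * ‖ff 2 z - ff 3 w‖ := by
  obtain ⟨h1, h2, h3⟩ := hz
  obtain ⟨k1, k2, k3⟩ := hw
  have e : ff 2 1 = ff 3 0 := by simp [ff, mm, cc, Complex.ext_iff]; norm_num
  have := sep (ff 2 z - ff 2 1) (ff 3 w - ff 3 0) _ _ _ _ rfl rfl rfl rfl ?_
  · rw [norm_sub_rev (ff 3 0)]
    convert this using 3
    rw [e]; ring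
  · refine le_trans ?_ (le_abs_self _)
    simp only [Complex.sub_re, Complex.sub_im, mul_sub, ff2_re, ff2_im, ff3_re, ff3_im,
      Complex.one_re, Complex.one_im, Complex.zero_re, Complex.zero_im]
    generalize Real.sqrt 3 * z.im = Y at *
    generalize Real.sqrt 3 * w.im = V at *
    nlinarith [mul_nonneg h1 k1, mul_nonneg h1 (sub_nonneg.2 k2),
      mul_nonneg (sub_nonneg.2 h3) k1, mul_nonneg (sub_nonneg.2 h3) (sub_nonneg.2 k2)]

lemma adj (n i r u c : ℕ) (hi : i + 1 < 4) (hr : r ≤ 4 ^ n) (hu : u ≤ 4 ^ n)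
    (h1 : i * 4 ^ n + r ≤ c) (h2 : c ≤ (i + 1) * 4 ^ n + u) :
    ‖kc (n + 1) (i * 4 ^ n + r) - kc (n + 1) c‖ ≤
      6 * ‖kc (n + 1) (i * 4 ^ n + r) - kc (n + 1) ((i + 1) * 4 ^ n + u)‖ := by
  have hz := kc_inT n r hr
  have hw := kc_inT n u hu
  have hs : ‖ff i (kc n r) - ff i 1‖ + ‖ff (i + 1) 0 - ff (i + 1) (kc n u)‖ ≤
      2 * ‖ff i (kc n r) - ff (i + 1) (kc n u)‖ := by
    have : i = 0 ∨ i = 1 ∨ i = 2 := by omega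
    rcases this with rfl | rfl | rfl
    · exact sep01 hz hw
    · exact sep12 hz hw
    · exact sep23 hz hw
  have e : ff i 1 = ff (i + 1) 0 := by
    have x := kc_decomp n i (4 ^ n) (by omega) le_rfl
    have y := kc_decomp n (i + 1) 0 hi (by simp)
    rw [kc_last] at x
    rw [kc_zero] at y
    rw [← x, ← y]
    congr 1; ring
  rw [kc_decomp n i r (by omega) hr, kc_decomp n (i + 1) u hi hu]
  rw [norm_ff, norm_ff] at hs
  have hm : (i + 1) * 4 ^ n = i * 4 ^ n + 4 ^ n := by ring
  have q0 := norm_nonneg (0 - kc n u)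
  by_cases hc : c ≤ (i + 1) * 4 ^ n
  · obtain ⟨v, rfl⟩ : ∃ v, c = i * 4 ^ n + v := ⟨c - i * 4 ^ n, by omega⟩
    rw [kc_decomp n i v (by omega) (by omega), norm_ff]
    have := right_end n r v (by omega) (by omega)
    linarith
  · obtain ⟨v, rfl⟩ : ∃ v, c = (i + 1) * 4 ^ n + v := ⟨c - (i + 1) * 4 ^ n, by omega⟩
    rw [kc_decomp n (i + 1) v (by omega) (by omega)]
    have := left_end n v u (by omega) (by omega)
    have t := norm_sub_le_norm_sub_add_norm_sub (ff i (kc n r)) (ff i 1) (ff (i + 1) (kc n v))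
    rw [norm_ff, e, norm_ff] at t
    have p0 := norm_nonneg (kc n r - 1)
    linarith

lemma main_bound (n a c b : ℕ) (hac : a ≤ c) (hcb : c ≤ b) (hb : b ≤ 4 ^ n) :
    ‖kc n a - kc n c‖ ≤ 6 * ‖kc n a - kc n b‖ := by
  induction n generalizing a c b with
  | zero =>
    simp at hb
    have : a = c ∨ c = b := by omega
    rcases this with rfl | rfl
    · simp
    · linarith [norm_nonneg (kc 0 a - kc 0 c)]
  | succ n ih =>
    have hd := diamT (kc_inT (n + 1) a ((hac.trans hcb).trans hb)) (kc_inT (n + 1) c (hcb.trans hb))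
    rw [pow_succ, mul_comm] at hb
    have far : ∀ i j r u : ℕ, i < 4 → j < 4 → r ≤ 4 ^ n → u ≤ 4 ^ n → i + 1 < j →
        a = i * 4 ^ n + r → b = j * 4 ^ n + u →
        (1 / 6 : ℝ) ≤ ‖kc (n + 1) a - kc (n + 1) b‖ := by
      intro i j r u hi hj hr hu hij ea eb
      rw [ea, eb, kc_decomp n i r hi hr, kc_decomp n j u hj hu]
      apply re_le
      obtain ⟨h1, h2, h3⟩ := kc_inT n r hr
      obtain ⟨k1, k2, k3⟩ := kc_inT n u hu
      have : (i = 0 ∧ j = 2) ∨ (i = 0 ∧ j = 3) ∨ (i = 1 ∧ j = 3) := by omega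
      rcases this with ⟨rfl, rfl⟩ | ⟨rfl, rfl⟩ | ⟨rfl, rfl⟩ <;>
        simp only [ff0_re, ff1_re, ff2_re, ff3_re] <;> linarith
    have same : ∀ i r u : ℕ, i < 4 → r ≤ 4 ^ n → u ≤ 4 ^ n → a = i * 4 ^ n + r →
        b = i * 4 ^ n + u →
        ‖kc (n + 1) a - kc (n + 1) c‖ ≤ 6 * ‖kc (n + 1) a - kc (n + 1) b‖ := by
      intro i r u hi hr hu ea eb
      obtain ⟨v, hv⟩ : ∃ v, c = i * 4 ^ n + v := ⟨c - i * 4 ^ n, by omega⟩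
      rw [ea, eb, hv, kc_decomp n i r hi hr, kc_decomp n i u hi hu,
        kc_decomp n i v hi (by omega), norm_ff, norm_ff]
      have := ih r v u (by omega) (by omega) hu
      linarith
    by_cases hab : a = b
    · have : a = c := by omega
      subst this; simp
    rcases split4 _ _ ((hac.trans hcb).trans hb) with ⟨r, hr, ea⟩ | ⟨r, hr, ea⟩ | ⟨r, hr, ea⟩ |
      ⟨r, hr, ea⟩ <;> rcases split4 _ _ hb with ⟨u, hu, eb⟩ | ⟨u, hu, eb⟩ | ⟨u, hu, eb⟩ |
      ⟨u, hu, eb⟩ <;>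
    first
    | exact same _ r u (by norm_num) hr hu ea eb
    | (exfalso; omega)
    | (rw [ea, eb]; exact adj n _ r u c (by norm_num) hr hu (by omega) (by omega))
    | (have hf := far _ _ r u (by norm_num) (by norm_num) hr hu (by norm_num) ea eb
       linarith)

lemma edge (n k : ℕ) (hk : k < 4 ^ n) : ‖kc n k - kc n (k + 1)‖ = (1 / 3 : ℝ) ^ n := by
  induction n generalizing k with
  | zero =>
    have : k = 0 := by simpa using hk
    simp [this, kc]
  | succ n ih =>
    have hp : (4 : ℕ) ^ (n + 1) = 4 * 4 ^ n := by ring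
    have hN : 0 < 4 ^ n := by positivity
    obtain ⟨i, r, hi, hr, rfl⟩ : ∃ i r, i < 4 ∧ r < 4 ^ n ∧ k = i * 4 ^ n + r :=
      ⟨k / 4 ^ n, k % 4 ^ n, (Nat.div_lt_iff_lt_mul hN).2 (by omega), Nat.mod_lt _ hN,
        (Nat.div_add_mod' _ _).symm⟩
    rw [add_assoc, kc_decomp n i r hi hr.le, kc_decomp n i (r + 1) hi hr, norm_ff, ih r hr]
    ring

lemma polyParam_mem {E : Type*} [NormedAddCommGroup E] [NormedSpace ℝ E]
    {m : ℕ} (hm : 1 ≤ m) (p : Fin (m + 1) → E) (S : Set E) (hS : Convex ℝ S)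
    (hp : ∀ i, p i ∈ S) (τ : ℝ) (h0 : 0 ≤ τ) (h1 : τ ≤ 1) : polyParam p τ ∈ S := by
  unfold polyParam
  have hx : 0 ≤ τ * m := by positivity
  have hx1 : τ * m ≤ m := by nlinarith [(Nat.cast_nonneg m : (0:ℝ) ≤ m)]
  apply hS.add_smul_sub_mem (hp _) (hp _)
  constructor
  · have : ((min ⌊τ * m⌋₊ (m - 1) : ℕ) : ℝ) ≤ τ * m :=
      le_trans (by exact_mod_cast min_le_left _ _) (Nat.floor_le hx)
    linarith
  · rcases le_total ⌊τ * m⌋₊ (m - 1) with h | h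
    · rw [min_eq_left h]
      have := Nat.lt_floor_add_one (τ * m)
      linarith
    · rw [min_eq_right h]
      push_cast [Nat.cast_sub hm]
      linarith

lemma polyParam_one {E : Type*} [NormedAddCommGroup E] [NormedSpace ℝ E]
    {m : ℕ} (hm : 1 ≤ m) (p : Fin (m + 1) → E) : polyParam p 1 = p (Fin.last m) := by
  obtain ⟨k, rfl⟩ : ∃ k, m = k + 1 := ⟨m - 1, by omega⟩
  have h1 : ⌊(1 : ℝ) * ((k + 1 : ℕ) : ℝ)⌋₊ = k + 1 := by rw [one_mul, Nat.floor_natCast]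
  unfold polyParam
  simp only [h1]
  simp [Fin.last]

lemma frechet {E : Type*} [NormedAddCommGroup E] [NormedSpace ℝ E]
    {m : ℕ} (hm : 1 ≤ m) (p : Fin (m + 1) → E) (u v : E) (ε : ℝ) (hv : p (Fin.last m) = v)
    (hε : dist u v ≤ ε) (hp : ∀ i, dist (p i) u ≤ ε) : FrechetMatchingWithin p u v ε := by
  have e0 : 0 ≤ ε := dist_nonneg.trans hε
  refine ⟨fun τ => min (2 * τ) 1, fun τ => max (2 * τ - 1) 0, by fun_prop, by fun_prop,
    ?_, ?_, ?_, ?_, by simp, by simp, by norm_num, by norm_num, ?_⟩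
  · intro x _ y _ h
    exact min_le_min (by linarith) le_rfl
  · intro x _ y _ h
    exact max_le_max (by linarith) le_rfl
  · rintro x ⟨h0, h1⟩
    exact ⟨le_min (by linarith) (by norm_num), min_le_right _ _⟩
  · rintro x ⟨h0, h1⟩
    exact ⟨le_max_right _ _, max_le (by linarith) (by norm_num)⟩
  · rintro τ ⟨h0, h1⟩
    rcases le_total (2 * τ) 1 with h | h
    · simp only [min_eq_left h, max_eq_right (by linarith : 2 * τ - 1 ≤ 0), zero_smul, add_zero]
      exact polyParam_mem hm p (Metric.closedBall u ε) (convex_closedBall _ _) hp _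
        (by linarith) h
    · simp only [min_eq_right h, max_eq_left (by linarith : 0 ≤ 2 * τ - 1), polyParam_one hm, hv]
      have : u + (2 * τ - 1) • (v - u) ∈ Metric.closedBall v ε :=
        (convex_closedBall v ε).add_smul_sub_mem hε (Metric.mem_closedBall_self e0)
          ⟨by linarith, by linarith⟩
      rw [dist_comm]; exact this

end KochAux

open KochAux

/-- For every `t ≥ 1` there is a stage `n` of the Koch construction such that the path
graph `F_n` is a `6`-Fréchet-spanner but not a `t`-spanner: (a) the path between any two
vertices admits a Fréchet matching to the straight segment within `6` times their distance,
while (b) every walk in `F_n` between the two extreme vertices is longer than `t` times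
their distance. -/
theorem koch_frechet_spanner_not_t_spanner (t : ℝ) (ht : 1 ≤ t) :
    ∃ n : ℕ,
      (∀ a b : ℕ, a < b → b ≤ 4 ^ n →
        FrechetMatchingWithin (m := b - a) (fun j => koch n (a + j)) (koch n a) (koch n b)
          (6 * dist (koch n a) (koch n b))) ∧
      (∀ m : ℕ, 1 ≤ m → ∀ q : Fin (m + 1) → ℕ,
        q 0 = 0 → q (Fin.last m) = 4 ^ n → (∀ j, q j ≤ 4 ^ n) →
        (∀ j : Fin m, q j.succ = q j.castSucc + 1 ∨ q j.castSucc = q j.succ + 1) →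
        t * dist (koch n 0) (koch n (4 ^ n)) <
          ∑ j : Fin m, dist (koch n (q j.castSucc)) (koch n (q j.succ))) := by
  obtain ⟨n, hn⟩ := pow_unbounded_of_one_lt t (by norm_num : (1 : ℝ) < 4 / 3)
  refine ⟨n, ?_, ?_⟩
  · intro a b hab hb
    apply frechet (by omega)
    · simp only [Fin.val_last]
      congr 1; omega
    · linarith [dist_nonneg (x := koch n a) (y := koch n b)]
    · intro i
      rw [dist_comm, dist_koch, dist_koch]
      exact main_bound n a _ b (by omega) (by have := i.2; omega) hb
  · intro m hm q q0 qm hq hstep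
    have hlen : ∀ j : Fin m, dist (koch n (q j.castSucc)) (koch n (q j.succ)) =
        (1 / 3 : ℝ) ^ n := by
      intro j
      rw [dist_koch]
      rcases hstep j with h | h
      · rw [h]; exact edge n _ (by have := hq j.succ; omega)
      · rw [h, norm_sub_rev]; exact edge n _ (by have := hq j.castSucc; omega)
    have hle : ∀ j : Fin (m + 1), q j ≤ j := by
      intro j
      induction j using Fin.induction with
      | zero => simp [q0]
      | succ j ih =>
        simp only [Fin.val_castSucc, Fin.val_succ] at ih ⊢
        rcases hstep j with h | h <;> omega
    have hm4 : 4 ^ n ≤ m := by simpa [qm] using hle (Fin.last m)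
    have hm4' : (4 : ℝ) ^ n ≤ m := by exact_mod_cast hm4
    rw [Finset.sum_congr rfl (fun j _ => hlen j), dist_koch, kc_zero, kc_last]
    simp only [zero_sub, norm_neg, norm_one, mul_one, Finset.sum_const, Finset.card_univ,
      Fintype.card_fin, nsmul_eq_mul]
    calc t < (4 / 3 : ℝ) ^ n := hn
      _ = 4 ^ n * (1 / 3 : ℝ) ^ n := by rw [← mul_pow]; norm_num
      _ ≤ m * (1 / 3 : ℝ) ^ n := by gcongr
end
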